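/- Let Z^n be i.i.d. N(0,1), let k = k_n with 1 ≤ k < n, and define p_n = Q^{-1}( (k/(n−k+1)) log n ) and q_n = (1/√n) Q^{-1}(1/n) (assuming (k/(n−k+1)) log n ≤ 1/2). Then P( (1/k)Σ_{i=1}^k Z_{(i)} − (1/n)Σ_{i=1}^n Z_i < p_n − q_n ) ≤ 2/n. -/

import Mathlib

open MeasureTheory ProbabilityTheory

/-- The i.i.d. standard Gaussian measure on `ℝⁿ`. -/
noncomputable def stdGaussianPi (n : ℕ) : Measure (Fin n → ℝ) :=
  Measure.pi fun _ => gaussianReal 0 1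

/-- The standard Gaussian tail function `Q(x) = P(Z > x)`. -/
noncomputable def gaussTail (x : ℝ) : ℝ := ((gaussianReal 0 1) (Set.Ioi x)).toReal

/-- The inverse Gaussian tail function `Q⁻¹`. -/
noncomputable def gaussTailInv (p : ℝ) : ℝ := sInf {x : ℝ | gaussTail x ≤ p}

/-- The `i`-th largest entry of a vector (indexed from `i = 1`). -/
noncomputable def kthLargest {n : ℕ} (z : Fin n → ℝ) (i : ℕ) : ℝ :=
  (List.insertionSort (· ≥ ·) (List.ofFn z)).getD (i - 1) 0

/-!
If the difference of averages is below `pₙ - qₙ`, then either the average of the `k` largest entries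
is below `pₙ`, hence so is the smallest of them, or the average of all entries exceeds `qₙ`.
In the first case some `m = n - k + 1` entries lie below `pₙ`. As `P(Z < pₙ) = 1 - k log n / m`, a
union bound over the sets of `m` entries gives
`n.choose (k - 1) * (1 - k log n / m) ^ m ≤ n ^ (k - 1) * exp (-k log n) = 1 / n`.
The second case has probability exactly `1 / n`, since `√n` times the average of all entries is
standard Gaussian.
-/

open scoped Finset

instance (n : ℕ) : IsProbabilityMeasure (stdGaussianPi n) := by
  unfold stdGaussianPi
  infer_instance

lemma apply_csInf_setOf_le_of_antitone {α β : Type*}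
    [ConditionallyCompleteLinearOrder α] [TopologicalSpace α] [OrderTopology α]
    [PartialOrder β] [TopologicalSpace β] [ClosedIicTopology β] {f : α → β} (hf : Continuous f)
    (hanti : Antitone f) {p : β} (hp : p ∈ Set.range f) (hbdd : BddBelow {x | f x ≤ p}) :
    f (sInf {x | f x ≤ p}) = p := by
  obtain ⟨x, rfl⟩ := hp
  have hclosed : IsClosed {y | f y ≤ f x} := isClosed_Iic.preimage hf
  exact le_antisymm (hclosed.csInf_mem ⟨x, le_rfl⟩ hbdd) (hanti (csInf_le hbdd le_rfl))

lemma continuous_cdf (μ : Measure ℝ) [IsProbabilityMeasure μ] [NullSingletonClass μ] :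
    Continuous (cdf μ) := by
  refine continuous_iff_continuousAt.2 fun x => ?_
  have hjump : ENNReal.ofReal (cdf μ x - Function.leftLim (cdf μ) x) = 0 := by
    rw [← StieltjesFunction.measure_singleton, measure_cdf, measure_singleton]
  rw [(monotone_cdf μ).continuousAt_iff_leftLim_eq_rightLim, StieltjesFunction.rightLim_eq]
  exact le_antisymm ((monotone_cdf μ).leftLim_le le_rfl)
    (sub_nonpos.1 (ENNReal.ofReal_eq_zero.1 hjump))

lemma gaussTail_eq_one_sub_cdf : gaussTail = fun x => 1 - cdf (gaussianReal 0 1) x := by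
  ext x
  rw [cdf_eq_real, ← probReal_compl_eq_one_sub measurableSet_Iic, Set.compl_Iic]
  rfl

lemma continuous_gaussTail : Continuous gaussTail := by
  have := nullSingletonClass_gaussianReal (μ := 0) (v := 1) one_ne_zero
  rw [gaussTail_eq_one_sub_cdf]
  exact continuous_const.sub (continuous_cdf _)

lemma antitone_gaussTail : Antitone gaussTail := by
  rw [gaussTail_eq_one_sub_cdf]
  exact fun _ _ hxy => sub_le_sub_left (monotone_cdf _ hxy) 1

lemma tendsto_gaussTail_atTop : Filter.Tendsto gaussTail Filter.atTop (nhds 0) := by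
  rw [gaussTail_eq_one_sub_cdf]
  simpa only [sub_self] using (tendsto_cdf_atTop (gaussianReal 0 1)).const_sub 1

lemma tendsto_gaussTail_atBot : Filter.Tendsto gaussTail Filter.atBot (nhds 1) := by
  rw [gaussTail_eq_one_sub_cdf]
  simpa only [sub_zero] using (tendsto_cdf_atBot (gaussianReal 0 1)).const_sub 1

lemma gaussTail_gaussTailInv {p : ℝ} (hp0 : 0 < p) (hp1 : p < 1) :
    gaussTail (gaussTailInv p) = p := by
  obtain ⟨a, ha⟩ := (tendsto_gaussTail_atBot.eventually_const_lt hp1).exists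
  obtain ⟨b, hb⟩ := (tendsto_gaussTail_atTop.eventually_lt_const hp0).exists
  exact apply_csInf_setOf_le_of_antitone continuous_gaussTail antitone_gaussTail
    (mem_range_of_exists_le_of_exists_ge continuous_gaussTail ⟨b, hb.le⟩ ⟨a, ha.le⟩)
    ⟨a, fun _ hx => (antitone_gaussTail.reflect_lt (hx.trans_lt ha)).le⟩

lemma gaussianReal_real_Iio_eq_one_sub_gaussTail (x : ℝ) :
    (gaussianReal 0 1).real (Set.Iio x) = 1 - gaussTail x := by
  have := nullSingletonClass_gaussianReal (μ := 0) (v := 1) one_ne_zero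
  rw [gaussTail_eq_one_sub_cdf, sub_sub_cancel, cdf_eq_real]
  exact measureReal_congr Iio_ae_eq_Iic

lemma map_sum_pi_gaussianReal {ι : Type*} [Fintype ι] (m : ι → ℝ) (v : ι → NNReal) :
    (Measure.pi fun i => gaussianReal (m i) (v i)).map (fun z => ∑ i, z i)
      = gaussianReal (∑ i, m i) (∑ i, v i) := by
  refine Measure.ext_of_charFun (funext fun t => ?_)
  rw [charFun_map_sum_pi_eq_prod, Finset.prod_apply]
  simp only [charFun_gaussianReal, ← Complex.exp_sum]
  push_cast
  rw [Finset.sum_sub_distrib, Finset.mul_sum, Finset.sum_mul, Finset.sum_mul, Finset.sum_div]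

lemma map_sum_div_sqrt_stdGaussianPi {n : ℕ} (hn : n ≠ 0) :
    (stdGaussianPi n).map (fun z => (∑ i, z i) / √n) = gaussianReal 0 1 := by
  have hsum : HasLaw (fun z : Fin n → ℝ => ∑ i, z i) (gaussianReal 0 n) (stdGaussianPi n) :=
    ⟨by fun_prop, by
      simpa [stdGaussianPi] using map_sum_pi_gaussianReal (fun _ : Fin n => 0) (fun _ => 1)⟩
  rw [(gaussianReal_div_const hsum √n).map_eq, zero_div]
  congr 1
  ext
  simp [hn]

lemma stdGaussianPi_real_mean_gt {n : ℕ} (hn : n ≠ 0) (t : ℝ) :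
    (stdGaussianPi n).real {z | (1 / √n) * t < (1 / (n : ℝ)) * ∑ i, z i} = gaussTail t := by
  have hpos : 0 < 1 / √(n : ℝ) := by positivity
  have hset : {z : Fin n → ℝ | (1 / √n) * t < (1 / (n : ℝ)) * ∑ i, z i}
      = (fun z => (∑ i, z i) / √n) ⁻¹' Set.Ioi t := by
    ext z
    have hmean : (1 / (n : ℝ)) * ∑ i, z i = (1 / √n) * ((∑ i, z i) / √n) := by
      rw [div_mul_div_comm, Real.mul_self_sqrt n.cast_nonneg, one_mul, one_div_mul_eq_div]
    rw [Set.mem_ofPred_eq, hmean, mul_lt_mul_iff_right₀ hpos, Set.mem_preimage, Set.mem_Ioi]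
  rw [hset, ← map_measureReal_apply (by fun_prop) measurableSet_Ioi,
    map_sum_div_sqrt_stdGaussianPi hn]
  rfl

lemma measureReal_pi_le_card_mem_le {ι Ω : Type*} [Fintype ι] [MeasurableSpace Ω]
    (μ : Measure Ω) [IsProbabilityMeasure μ] (s : Set Ω) [DecidablePred (· ∈ s)] (m : ℕ) :
    (Measure.pi fun _ : ι => μ).real {z | m ≤ #{i | z i ∈ s}}
      ≤ (Fintype.card ι).choose m * μ.real s ^ m := by
  have hcover : {z : ι → Ω | m ≤ #{i | z i ∈ s}} ⊆
      ⋃ S ∈ (Finset.univ : Finset ι).powersetCard m, (S : Set ι).pi fun _ => s := by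
    intro z hz
    obtain ⟨S, hS, hcard⟩ := Finset.exists_subset_card_eq hz
    exact Set.mem_biUnion (Finset.mem_powersetCard.2 ⟨S.subset_univ, hcard⟩)
      fun i hi => (Finset.mem_filter.1 (hS hi)).2
  calc _ ≤ (Measure.pi fun _ : ι => μ).real
          (⋃ S ∈ (Finset.univ : Finset ι).powersetCard m, (S : Set ι).pi fun _ => s) :=
        measureReal_mono hcover (measure_ne_top _ _)
    _ ≤ ∑ S ∈ (Finset.univ : Finset ι).powersetCard m,
          (Measure.pi fun _ : ι => μ).real ((S : Set ι).pi fun _ => s) :=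
        measureReal_biUnion_finset_le _ _
    _ = ∑ _ ∈ (Finset.univ : Finset ι).powersetCard m, μ.real s ^ m := by
        refine Finset.sum_congr rfl fun _ hS => ?_
        rw [measureReal_def, Measure.pi_pi_finset, Finset.prod_const,
          (Finset.mem_powersetCard.1 hS).2, ENNReal.toReal_pow, measureReal_def]
    _ = _ := by
        rw [Finset.sum_const, Finset.card_powersetCard, Finset.card_univ, nsmul_eq_mul]

section OrderStatistics

variable {n : ℕ}

lemma kthLargest_le_kthLargest (z : Fin n → ℝ) {i j : ℕ} (hij : i ≤ j) (hj : j ≤ n) :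
    kthLargest z j ≤ kthLargest z i := by
  obtain rfl | hlt := hij.eq_or_lt
  · rfl
  · have hlen : ((List.ofFn z).insertionSort (· ≥ ·)).length = n := by simp
    unfold kthLargest
    rw [List.getD_eq_getElem _ _ (by omega), List.getD_eq_getElem _ _ (by omega)]
    exact List.sortedGE_insertionSort.getElem_ge_getElem_of_le (by omega)

lemma kthLargest_le_average (z : Fin n → ℝ) {k : ℕ} (hk1 : 1 ≤ k) (hkn : k ≤ n) :
    kthLargest z k ≤ (1 / (k : ℝ)) * ∑ i ∈ Finset.range k, kthLargest z (i + 1) := by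
  have hsum : k • kthLargest z k ≤ ∑ i ∈ Finset.range k, kthLargest z (i + 1) := by
    simpa using Finset.card_nsmul_le_sum (Finset.range k) (fun i => kthLargest z (i + 1)) _
      fun i hi => kthLargest_le_kthLargest z (Finset.mem_range.1 hi) hkn
  rw [one_div_mul_eq_div, le_div_iff₀' (by positivity)]
  simpa using hsum

lemma countP_insertionSort_ofFn {α : Type*} (r : α → α → Prop) [DecidableRel r] (z : Fin n → α)
    (p : α → Prop) [DecidablePred p] :
    ((List.ofFn z).insertionSort r).countP p = #{i | p (z i)} := by
  rw [(List.perm_insertionSort r _).countP_eq, ← Multiset.coe_countP, ← Fin.univ_val_map,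
    Multiset.countP_map]
  rfl

lemma le_card_lt_of_kthLargest_lt {z : Fin n → ℝ} {k : ℕ} (hk1 : 1 ≤ k) (hkn : k ≤ n) {x : ℝ}
    (h : kthLargest z k < x) : n - k + 1 ≤ #{i | z i < x} := by
  set l := (List.ofFn z).insertionSort (· ≥ ·) with hl
  have hlen : l.length = n := by simp [hl]
  have htail : ∀ a ∈ l.drop (k - 1), a < x := by
    intro a ha
    obtain ⟨m, hm, rfl⟩ := List.getElem_of_mem ha
    rw [List.length_drop] at hm
    rw [List.getElem_drop, ← List.getD_eq_getElem (d := 0)]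
    exact (kthLargest_le_kthLargest z (by omega : k ≤ k - 1 + m + 1) (by omega)).trans_lt h
  calc n - k + 1 = (l.drop (k - 1)).length := by rw [List.length_drop]; omega
    _ = (l.drop (k - 1)).countP (· < x) :=
        (List.countP_eq_length.2 fun a ha => decide_eq_true (htail a ha)).symm
    _ ≤ l.countP (· < x) := (List.drop_sublist _ _).countP_le
    _ = _ := countP_insertionSort_ofFn _ z (· < x)

lemma measureReal_pi_kthLargest_lt_le (μ : Measure ℝ) [IsProbabilityMeasure μ] {k : ℕ}
    (hk1 : 1 ≤ k) (hkn : k ≤ n) (x : ℝ) :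
    (Measure.pi fun _ : Fin n => μ).real {z | kthLargest z k < x}
      ≤ n.choose (k - 1) * μ.real (Set.Iio x) ^ (n - k + 1) := by
  classical
  calc _ ≤ (Measure.pi fun _ : Fin n => μ).real
          {z | n - k + 1 ≤ #{i | z i ∈ Set.Iio x}} :=
        measureReal_mono fun z hz => by
          simpa using le_card_lt_of_kthLargest_lt hk1 hkn hz
    _ ≤ n.choose (n - k + 1) * μ.real (Set.Iio x) ^ (n - k + 1) := by
        simpa using measureReal_pi_le_card_mem_le (ι := Fin n) μ (Set.Iio x) (n - k + 1)
    _ = _ := by rw [← Nat.choose_symm (by omega : k - 1 ≤ n), (by omega : n - (k - 1) = n - k + 1)]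

end OrderStatistics

lemma choose_mul_one_sub_pow_le {n k : ℕ} (hk1 : 1 ≤ k) (hkn : k ≤ n)
    (hp : (k : ℝ) / (n - k + 1) * Real.log n ≤ 1) :
    n.choose (k - 1) * (1 - (k : ℝ) / (n - k + 1) * Real.log n) ^ (n - k + 1) ≤ 1 / (n : ℝ) := by
  have hn0 : (0 : ℝ) < n := by exact_mod_cast hk1.trans hkn
  have hm : ((n - k + 1 : ℕ) : ℝ) = n - k + 1 := by push_cast [Nat.cast_sub hkn]; rfl
  have hm0 : (0 : ℝ) < n - k + 1 := hm ▸ Nat.cast_pos.2 (Nat.succ_pos _)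
  rw [div_mul_eq_mul_div] at hp ⊢
  have hpow : (1 - k * Real.log n / (n - k + 1)) ^ (n - k + 1) ≤ ((n : ℝ) ^ k)⁻¹ := by
    calc _ ≤ Real.exp (-(k * Real.log n)) := by
          rw [← hm] at hp ⊢
          exact Real.one_sub_div_pow_le_exp_neg ((div_le_one (hm ▸ hm0)).1 hp)
      _ = ((n : ℝ) ^ k)⁻¹ := by rw [Real.exp_neg, Real.exp_nat_mul, Real.exp_log hn0]
  have hchoose : (n.choose (k - 1) : ℝ) ≤ (n : ℝ) ^ (k - 1) := by
    exact_mod_cast Nat.choose_le_pow n (k - 1)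
  calc _ ≤ (n : ℝ) ^ (k - 1) * ((n : ℝ) ^ k)⁻¹ := by gcongr
    _ = 1 / (n : ℝ) := by
        obtain ⟨j, rfl⟩ := Nat.exists_eq_add_of_le' hk1
        rw [Nat.add_sub_cancel, pow_succ]
        field_simp

lemma stdGaussianPi_real_kthLargest_lt_le {n k : ℕ} (hk1 : 1 ≤ k) (hkn : k < n)
    (hp : (k : ℝ) / ((n : ℝ) - k + 1) * Real.log n < 1) :
    (stdGaussianPi n).real
      {z | kthLargest z k < gaussTailInv ((k : ℝ) / ((n : ℝ) - k + 1) * Real.log n)}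
      ≤ 1 / (n : ℝ) := by
  have hp0 : 0 < (k : ℝ) / ((n : ℝ) - k + 1) * Real.log n := by
    have hkn' : (k : ℝ) < n := Nat.cast_lt.2 hkn
    have hlog : 0 < Real.log n := Real.log_pos (Nat.one_lt_cast.2 (by omega))
    have hm : 0 < (n : ℝ) - k + 1 := by linarith
    exact mul_pos (div_pos (Nat.cast_pos.2 hk1) hm) hlog
  refine (measureReal_pi_kthLargest_lt_le _ hk1 hkn.le _).trans ?_
  rw [gaussianReal_real_Iio_eq_one_sub_gaussTail, gaussTail_gaussTailInv hp0 hp]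
  exact choose_mul_one_sub_pow_le hk1 hkn.le hp.le

theorem stmt13_general (n k : ℕ) (hk1 : 1 ≤ k) (hkn : k < n)
    (hp : (k : ℝ) / ((n : ℝ) - k + 1) * Real.log n < 1) :
    stdGaussianPi n
      {z | (1 / (k : ℝ)) * (∑ i ∈ Finset.range k, kthLargest z (i + 1))
            - (1 / (n : ℝ)) * ∑ i, z i
          < gaussTailInv ((k : ℝ) / ((n : ℝ) - k + 1) * Real.log n)
            - (1 / Real.sqrt n) * gaussTailInv (1 / (n : ℝ))}
      ≤ ENNReal.ofReal (2 / (n : ℝ)) := by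
  set p := (k : ℝ) / ((n : ℝ) - k + 1) * Real.log n
  set q := gaussTailInv (1 / (n : ℝ))
  have hn : (1 : ℝ) < n := Nat.one_lt_cast.2 (by omega)
  refine (ENNReal.le_ofReal_iff_toReal_le (measure_ne_top _ _) (by positivity)).2 ?_
  have hmean : (stdGaussianPi n).real {z | (1 / √n) * q < (1 / (n : ℝ)) * ∑ i, z i} = 1 / n := by
    rw [stdGaussianPi_real_mean_gt (by omega),
      gaussTail_gaussTailInv (by positivity) ((div_lt_one (by positivity)).2 hn)]
  calc _ ≤ (stdGaussianPi n).real ({z | kthLargest z k < gaussTailInv p} ∪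
          {z | (1 / √n) * q < (1 / (n : ℝ)) * ∑ i, z i}) := by
        refine measureReal_mono fun z hz => ?_
        contrapose! hz
        simp only [Set.mem_union, Set.mem_ofPred_eq, not_or, not_lt] at hz ⊢
        linarith [hz.1, hz.2, kthLargest_le_average z hk1 hkn.le]
    _ ≤ 1 / n + 1 / n := (measureReal_union_le _ _).trans
        (add_le_add (stdGaussianPi_real_kthLargest_lt_le hk1 hkn hp) hmean.le)
    _ = 2 / n := by ring

/-- `P( (1/k)·Σ_{i≤k} Z₍ᵢ₎ − (1/n)·Σᵢ Zᵢ < pₙ − qₙ ) ≤ 2/n`, where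
`pₙ = Q⁻¹((k/(n−k+1)) log n)` and `qₙ = (1/√n) Q⁻¹(1/n)`. -/
theorem stmt13 (n k : ℕ) (hk1 : 1 ≤ k) (hkn : k < n)
    (hsmall : (k : ℝ) / ((n : ℝ) - k + 1) * Real.log n ≤ 1 / 2) :
    stdGaussianPi n
      {z | (1 / (k : ℝ)) * (∑ i ∈ Finset.range k, kthLargest z (i + 1))
            - (1 / (n : ℝ)) * ∑ i, z i
          < gaussTailInv ((k : ℝ) / ((n : ℝ) - k + 1) * Real.log n)
            - (1 / Real.sqrt n) * gaussTailInv (1 / (n : ℝ))}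
      ≤ ENNReal.ofReal (2 / (n : ℝ)) :=
  stmt13_general n k hk1 hkn (hsmall.trans_lt one_half_lt_one)
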